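/- Let f be a cellular automaton on A^ℤ. A word s ∈ A* occurs in ω̃(f) (i.e., s ∈ L(ω̃(f))) if and only if there exist a word v ∈ A* and i ∈ ℤ such that for all words u, w ∈ A* there exist infinitely many t ∈ ℕ with f^t([u v w]_{i−|u|}) ∩ [s] ≠ ∅. -/

import Mathlib

/-!
Both sides of the equivalence say that a certain set of configurations is not comeager. For a
compact open set `S`, compactness turns `S ∩ ω̃(f) ≠ ∅` into the statement that `D(Sᶜ)` is not
comeager, and `D(Sᶜ)` is the countable union over `N` of the closed sets of points whose orbit
avoids `S` from time `N` on. In a Baire space such a union is comeager iff the interiors of its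
members are dense, so it fails to be comeager iff some nonempty open set `V` meets none of these
interiors, i.e. every nonempty open `W ⊆ V` meets `S` at infinitely many times. For cylinders
`V = [v]_i` it suffices to test this on the basic sets `W = [u v w]_{i - |u|}`, and the shift
invariance of `ω̃(f)` allows `s` to be read at position `0`.
-/

open Filter Set Function

namespace Gls

variable {A : Type*}

/-- The left shift map on `A^ℤ`. -/
def shift (x : ℤ → A) : ℤ → A := fun i => x (i + 1)

/-- A cellular automaton: a continuous shift-commuting self-map of the full shift. -/
def IsCA [TopologicalSpace A] (f : (ℤ → A) → (ℤ → A)) : Prop :=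
  Continuous f ∧ f ∘ shift = shift ∘ f

/-- The set of limit points of the forward orbit of `x` under `f`. -/
def omegaSet [TopologicalSpace A] (f : (ℤ → A) → (ℤ → A)) (x : ℤ → A) : Set (ℤ → A) :=
  {y | MapClusterPt y atTop fun t => f^[t] x}

/-- The realm of attraction of `Y`. -/
def realm [TopologicalSpace A] (f : (ℤ → A) → (ℤ → A)) (Y : Set (ℤ → A)) : Set (ℤ → A) :=
  {x | omegaSet f x ⊆ Y}

/-- The generic limit set: the intersection of all closed sets whose realm is comeager. -/
def genLimitSet [TopologicalSpace A] (f : (ℤ → A) → (ℤ → A)) : Set (ℤ → A) :=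
  ⋂₀ {C | IsClosed C ∧ realm f C ∈ residual (ℤ → A)}

/-- The word `x_{[i, i+n)}` of length `n` read in the configuration `x` from position `i`. -/
def word (x : ℤ → A) (i : ℤ) (n : ℕ) : List A :=
  (List.range n).map fun k => x (i + k)

/-- The cylinder set `[w]_i`. -/
def cylinder (w : List A) (i : ℤ) : Set (ℤ → A) := {x | word x i w.length = w}

/-- The language of `X`: all finite words occurring in points of `X`. -/
def lang (X : Set (ℤ → A)) : Set (List A) :=
  {w | ∃ x ∈ X, ∃ i : ℤ, word x i w.length = w}

section Cylinder

theorem rightInverse_shift : RightInverse (fun (x : ℤ → A) i => x (i - 1)) shift :=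
  fun x => funext fun i => congrArg x (add_sub_cancel_right i 1)

-- In the definition of `word` the bound variable is an integer: `List.range n` is coerced to a
-- list of integers through the list monad.
theorem word_eq_map_range (x : ℤ → A) (i : ℤ) (n : ℕ) :
    word x i n = (List.range n).map fun k : ℕ => x (i + k) := by
  change List.map _ ((List.range n).flatMap (pure ∘ Nat.cast)) = _
  rw [List.flatMap_pure_eq_map, List.map_map]
  rfl

theorem length_word (x : ℤ → A) (i : ℤ) (n : ℕ) : (word x i n).length = n := by
  rw [word_eq_map_range, List.length_map, List.length_range]

theorem word_add (x : ℤ → A) (i : ℤ) (m n : ℕ) :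
    word x i (m + n) = word x i m ++ word x (i + m) n := by
  simp only [word_eq_map_range, List.range_add, List.map_append, List.map_map, comp_def,
    Nat.cast_add, add_assoc]

theorem word_shift (x : ℤ → A) (i : ℤ) (n : ℕ) : word (shift x) i n = word x (i + 1) n := by
  simp only [word_eq_map_range, shift, add_right_comm]

theorem mem_cylinder_iff {w : List A} {i : ℤ} {x : ℤ → A} :
    x ∈ cylinder w i ↔ ∀ k : Fin w.length, x (i + k) = w[k] := by
  rw [cylinder, mem_ofPred_eq, word_eq_map_range, List.ext_getElem_iff]
  simp [Fin.forall_iff]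

theorem mem_cylinder_word_iff {x y : ℤ → A} {i : ℤ} {n : ℕ} :
    y ∈ cylinder (word x i n) i ↔ ∀ k < n, y (i + k) = x (i + k) := by
  rw [cylinder, mem_ofPred_eq, length_word]
  simp [word_eq_map_range]

theorem cylinder_append (u v : List A) (i : ℤ) :
    cylinder (u ++ v) i = cylinder u i ∩ cylinder v (i + u.length) := by
  ext x
  simp only [cylinder, mem_inter_iff, mem_ofPred_eq, List.length_append, word_add]
  exact ⟨fun h => List.append_inj h (length_word x i u.length), fun ⟨hu, hv⟩ => by rw [hu, hv]⟩

theorem cylinder_append_append_subset (u v w : List A) (i : ℤ) :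
    cylinder (u ++ v ++ w) (i - u.length) ⊆ cylinder v i := by
  rw [cylinder_append, cylinder_append, sub_add_cancel]
  exact inter_subset_left.trans inter_subset_right

theorem preimage_shift_cylinder (w : List A) (i : ℤ) :
    shift ⁻¹' cylinder w i = cylinder w (i + 1) := by
  ext x
  simp only [cylinder, mem_preimage, mem_ofPred_eq, word_shift]

theorem cylinder_nonempty [Nonempty A] (w : List A) (i : ℤ) : (cylinder w i).Nonempty := by
  obtain ⟨a⟩ := ‹Nonempty A›
  refine ⟨fun j => w.getD (j - i).toNat a, mem_cylinder_iff.2 fun k => ?_⟩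
  simp

theorem isClopen_cylinder [TopologicalSpace A] [DiscreteTopology A] (w : List A) (i : ℤ) :
    IsClopen (cylinder w i) := by
  have heq : cylinder w i = ⋂ k : Fin w.length, (fun x : ℤ → A => x (i + k)) ⁻¹' {w[k]} := by
    ext x
    simp only [mem_cylinder_iff, mem_iInter, mem_preimage, mem_singleton_iff]
  rw [heq]
  exact isClopen_iInter_of_finite fun k => (isClopen_discrete _).preimage (continuous_apply _)

theorem exists_cylinder_word_subset [TopologicalSpace A] {U : Set (ℤ → A)} (hU : IsOpen U)
    {x : ℤ → A} (hx : x ∈ U) (i : ℤ) (l : ℕ) :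
    ∃ n : ℕ, cylinder (word x (i - n) (n + l + n)) (i - n) ⊆ U := by
  obtain ⟨I, o, ho, hI⟩ := isOpen_pi_iff.1 hU x hx
  obtain ⟨n, hn⟩ : ∃ n : ℕ, ∀ j ∈ I, (j - i).natAbs < n :=
    ⟨I.sup (fun j => (j - i).natAbs) + 1, fun _ hj =>
      Nat.lt_succ_of_le (Finset.le_sup (f := fun j => (j - i).natAbs) hj)⟩
  refine ⟨n, fun y hy => hI fun j hj => ?_⟩
  have hjn := hn j hj
  obtain ⟨k, hk⟩ := Int.le.dest (show i - n ≤ j by lia)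
  have hyx : y j = x j := hk ▸ mem_cylinder_word_iff.1 hy k (by lia)
  exact hyx ▸ (ho j hj).2

theorem exists_cylinder_append_append_subset [TopologicalSpace A] {U : Set (ℤ → A)}
    (hU : IsOpen U) {v : List A} {i : ℤ} (h : (cylinder v i ∩ U).Nonempty) :
    ∃ u w : List A, cylinder (u ++ v ++ w) (i - u.length) ⊆ U := by
  obtain ⟨x, hxv, hxU⟩ := h
  obtain ⟨n, hn⟩ := exists_cylinder_word_subset hU hxU i v.length
  have hword : word x (i - n) (n + v.length + n)
      = word x (i - n) n ++ v ++ word x (i + v.length) n := by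
    rw [word_add, word_add, sub_add_cancel, Nat.cast_add, ← add_assoc, sub_add_cancel,
      show word x i v.length = v from hxv]
  exact ⟨word x (i - n) n, word x (i + v.length) n, by rwa [length_word, ← hword]⟩

theorem mem_lang_iff {X : Set (ℤ → A)} {s : List A} :
    s ∈ lang X ↔ ∃ i, (cylinder s i ∩ X).Nonempty := by
  simp only [lang, cylinder, Set.Nonempty, mem_inter_iff, mem_ofPred_eq]
  grind

theorem mem_lang_iff_of_preimage_shift_eq {X : Set (ℤ → A)} (hX : shift ⁻¹' X = X) {s : List A} :
    s ∈ lang X ↔ (cylinder s 0 ∩ X).Nonempty := by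
  have hsucc (i : ℤ) : (cylinder s (i + 1) ∩ X).Nonempty ↔ (cylinder s i ∩ X).Nonempty := by
    rw [← rightInverse_shift.surjective.nonempty_preimage (s := cylinder s i ∩ X), preimage_inter,
      preimage_shift_cylinder, hX]
  have hzero (i : ℤ) : (cylinder s i ∩ X).Nonempty ↔ (cylinder s 0 ∩ X).Nonempty := by
    induction i using Int.induction_on with
    | zero => rfl
    | succ n ih => rw [hsucc, ih]
    | pred n ih => rw [← ih, ← hsucc, sub_add_cancel]
  rw [mem_lang_iff, exists_congr hzero, exists_const]

end Cylinder

section Avoidance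

variable {X : Type*} {f : X → X} {S W : Set X}

/-- The set of points whose orbit under `f` avoids `S` from time `N` on. The realm of the
complement of a compact open set `S` is the union of these sets. -/
def avoidFrom (f : X → X) (S : Set X) (N : ℕ) : Set X := {x | ∀ t ≥ N, f^[t] x ∉ S}

theorem infinite_image_iterate_inter_iff :
    {t : ℕ | (f^[t] '' W ∩ S).Nonempty}.Infinite ↔ ∀ N, ¬W ⊆ avoidFrom f S N := by
  simp only [← Nat.frequently_atTop_iff_infinite, frequently_atTop, image_inter_nonempty_iff,
    avoidFrom, not_subset, mem_ofPred_eq, not_forall, not_not, exists_prop]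
  exact forall_congr' fun N =>
    ⟨fun ⟨t, ht, x, hxW, hxS⟩ => ⟨x, hxW, t, ht, hxS⟩,
      fun ⟨x, hxW, t, ht, hxS⟩ => ⟨t, ht, x, hxW, hxS⟩⟩

end Avoidance

section Baire

variable {X : Type*} [TopologicalSpace X] {f : X → X} {S V W : Set X}

theorem iUnion_mem_residual_iff_dense_iUnion_interior [BaireSpace X] {ι : Type*} [Countable ι]
    {F : ι → Set X} (hF : ∀ i, IsClosed (F i)) :
    ⋃ i, F i ∈ residual X ↔ Dense (⋃ i, interior (F i)) := by
  constructor
  · intro h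
    obtain ⟨G, hGF, hG, hGd⟩ := mem_residual.1 h
    exact hG.dense_iUnion_interior_of_closed hGd hF hGF
  · intro h
    exact mem_of_superset (residual_of_dense_open (isOpen_iUnion fun _ => isOpen_interior) h)
      (iUnion_mono fun _ => interior_subset)

/-- `V` enables `S`: every nonempty open subset of `V` meets `S` at infinitely many times. This is
the topological form of the relation between the words `v` and `s` in the theorem. -/
def Enables (f : X → X) (V S : Set X) : Prop :=
  ∀ W ⊆ V, IsOpen W → W.Nonempty → {t : ℕ | (f^[t] '' W ∩ S).Nonempty}.Infinite

theorem isClosed_avoidFrom (hf : Continuous f) (hS : IsOpen S) (N : ℕ) :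
    IsClosed (avoidFrom f S N) := by
  simp only [avoidFrom, ofPred_forall]
  exact isClosed_biInter fun t _ => (hS.preimage (hf.iterate t)).isClosed_compl

theorem Enables.mono (h : Enables f V S) (hWV : W ⊆ V) : Enables f W S :=
  fun W' hW' => h W' (hW'.trans hWV)

theorem enables_iff_disjoint_iUnion_interior (hV : IsOpen V) :
    Enables f V S ↔ Disjoint V (⋃ N, interior (avoidFrom f S N)) := by
  simp only [Enables, infinite_image_iterate_inter_iff, disjoint_iUnion_right]
  constructor
  · intro h N
    rw [disjoint_iff_inter_eq_empty, ← not_nonempty_iff_eq_empty]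
    exact fun hne => h _ inter_subset_left (hV.inter isOpen_interior) hne N
      (inter_subset_right.trans interior_subset)
  · rintro h W hWV hW ⟨x, hx⟩ N hWN
    exact disjoint_left.1 (h N) (hWV hx) (interior_maximal hWN hW hx)

theorem iUnion_avoidFrom_notMem_residual_iff [BaireSpace X] (hf : Continuous f) (hS : IsOpen S) :
    ⋃ N, avoidFrom f S N ∉ residual X ↔ ∃ V, IsOpen V ∧ V.Nonempty ∧ Enables f V S := by
  rw [iUnion_mem_residual_iff_dense_iUnion_interior (isClosed_avoidFrom hf hS),
    dense_iff_inter_open]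
  push Not
  refine exists_congr fun V => and_congr_right fun hV => and_congr_right fun _ => ?_
  rw [enables_iff_disjoint_iUnion_interior hV, disjoint_iff_inter_eq_empty]

end Baire

section GenLimitSet

variable [TopologicalSpace A] {f : (ℤ → A) → (ℤ → A)} {S : Set (ℤ → A)}

theorem realm_mono {Y Z : Set (ℤ → A)} (h : Y ⊆ Z) : realm f Y ⊆ realm f Z :=
  fun _ hx => hx.trans h

theorem realm_sInter (𝒞 : Set (Set (ℤ → A))) : realm f (⋂₀ 𝒞) = ⋂ C ∈ 𝒞, realm f C := by
  ext x
  simp only [realm, subset_sInter_iff, mem_ofPred_eq, mem_iInter]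

theorem realm_compl_eq_iUnion_avoidFrom (hS : IsCompact S) (hSo : IsOpen S) :
    realm f Sᶜ = ⋃ N, avoidFrom f S N := by
  ext x
  have avoid_iff : x ∈ ⋃ N, avoidFrom f S N ↔ ¬∃ᶠ t in atTop, f^[t] x ∈ S := by
    simp only [avoidFrom, mem_iUnion, mem_ofPred_eq, not_frequently, eventually_atTop]
  rw [avoid_iff]
  constructor
  · intro hx hfreq
    obtain ⟨y, hyS, hy⟩ := hS.exists_mapClusterPt_of_frequently hfreq
    exact hx hy hyS
  · intro hx y hy hyS
    exact hx (hy.frequently (hSo.mem_nhds hyS))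

theorem inter_genLimitSet_nonempty_iff (hS : IsCompact S) (hSo : IsOpen S) :
    (S ∩ genLimitSet f).Nonempty ↔ realm f Sᶜ ∉ residual (ℤ → A) := by
  constructor
  · rintro ⟨x, hxS, hx⟩ hres
    exact hx Sᶜ ⟨hSo.isClosed_compl, hres⟩ hxS
  · intro hres
    refine hS.nonempty_inter_sInter (fun C hC => hC.1) fun 𝒞 h𝒞 hfin => ?_
    by_contra hempty
    have hsub : ⋂₀ 𝒞 ⊆ Sᶜ := fun x hx hxS => hempty ⟨x, hxS, hx⟩
    refine hres (mem_of_superset ?_ (realm_mono hsub))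
    rw [realm_sInter]
    exact (biInter_mem hfin).2 fun C hC => (h𝒞 hC).2

theorem inter_genLimitSet_nonempty_iff_exists_enables [BaireSpace (ℤ → A)] (hf : Continuous f)
    (hS : IsCompact S) (hSo : IsOpen S) :
    (S ∩ genLimitSet f).Nonempty ↔ ∃ V, IsOpen V ∧ V.Nonempty ∧ Enables f V S := by
  rw [inter_genLimitSet_nonempty_iff hS hSo, realm_compl_eq_iUnion_avoidFrom hS hSo,
    iUnion_avoidFrom_notMem_residual_iff hf hSo]

end GenLimitSet

section ShiftInvariance

variable [TopologicalSpace A] {f φ : (ℤ → A) → (ℤ → A)}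

theorem mapsTo_omegaSet (hφ : Continuous φ) (hcomm : Function.Commute f φ) (x : ℤ → A) :
    MapsTo φ (omegaSet f x) (omegaSet f (φ x)) := by
  intro y hy
  have horbit : φ ∘ (fun t => f^[t] x) = fun t => f^[t] (φ x) :=
    funext fun t => (hcomm.iterate_left t x).symm
  rw [omegaSet, mem_ofPred_eq, ← horbit]
  exact MapClusterPt.continuousAt_comp hφ.continuousAt hy

theorem mapsTo_genLimitSet (hφ : Continuous φ) (hφo : IsOpenMap φ)
    (hcomm : Function.Commute f φ) : MapsTo φ (genLimitSet f) (genLimitSet f) := by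
  rintro x hx C ⟨hC, hres⟩
  have hsub : φ ⁻¹' realm f C ⊆ realm f (φ ⁻¹' C) := fun z hz y hy =>
    hz (mapsTo_omegaSet hφ hcomm z hy)
  exact hx _ ⟨hC.preimage hφ, mem_of_superset (tendsto_residual_of_isOpenMap hφ hφo hres) hsub⟩

theorem preimage_genLimitSet (φ : (ℤ → A) ≃ₜ (ℤ → A)) (hcomm : Function.Commute f φ) :
    φ ⁻¹' genLimitSet f = genLimitSet f := by
  have hsymm : Function.Commute f φ.symm :=
    Semiconj.inverses_right hcomm φ.right_inv φ.left_inv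
  refine Subset.antisymm (fun x hx => ?_)
    (mapsTo_genLimitSet φ.continuous φ.isOpenMap hcomm)
  simpa only [φ.symm_apply_apply] using
    mapsTo_genLimitSet φ.symm.continuous φ.symm.isOpenMap hsymm hx

/-- The shift as a self-homeomorphism of `A^ℤ`; its invertibility makes `ω̃(f)` invariant in both
directions. -/
def shiftHomeomorph : (ℤ → A) ≃ₜ (ℤ → A) where
  toFun := shift
  invFun x i := x (i - 1)
  left_inv x := by simp [shift]
  right_inv := rightInverse_shift
  continuous_toFun := by unfold shift; fun_prop
  continuous_invFun := by fun_prop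

theorem IsCA.preimage_shift_genLimitSet (hf : IsCA f) :
    shift ⁻¹' genLimitSet f = genLimitSet f :=
  preimage_genLimitSet shiftHomeomorph (congrFun hf.2)

end ShiftInvariance

section Enables

variable [TopologicalSpace A] [DiscreteTopology A] [Nonempty A] {f : (ℤ → A) → (ℤ → A)}

theorem enables_cylinder_iff {S : Set (ℤ → A)} {v : List A} {i : ℤ} :
    Enables f (cylinder v i) S ↔ ∀ u w : List A,
      {t : ℕ | (f^[t] '' cylinder (u ++ v ++ w) (i - u.length) ∩ S).Nonempty}.Infinite := by
  constructor
  · intro h u w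
    exact h _ (cylinder_append_append_subset u v w i) (isClopen_cylinder _ _).isOpen
      (cylinder_nonempty _ _)
  · intro h W hWv hW hne
    obtain ⟨u, w, hsub⟩ := exists_cylinder_append_append_subset hW
      ((inter_eq_right.2 hWv).symm ▸ hne)
    exact (h u w).mono fun t ht => ht.mono (inter_subset_inter_left S (image_mono hsub))

theorem exists_isOpen_enables_iff_exists_cylinder {S : Set (ℤ → A)} :
    (∃ V, IsOpen V ∧ V.Nonempty ∧ Enables f V S) ↔
      ∃ (v : List A) (i : ℤ), Enables f (cylinder v i) S := by
  constructor
  · rintro ⟨V, hV, ⟨x, hx⟩, henables⟩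
    obtain ⟨n, hn⟩ := exists_cylinder_word_subset hV hx 0 0
    exact ⟨_, _, henables.mono hn⟩
  · rintro ⟨v, i, h⟩
    exact ⟨_, (isClopen_cylinder v i).isOpen, cylinder_nonempty v i, h⟩

end Enables

/-- a word `s` occurs in `ω̃(f)` iff some word `v` placed at some position `i`
"enables" it: for all words `u, w` there are infinitely many `t` with
`f^t([u v w]_{i - |u|}) ∩ [s] ≠ ∅`. -/
theorem stmt1 [Fintype A] [Nonempty A] [TopologicalSpace A] [DiscreteTopology A]
    (f : (ℤ → A) → (ℤ → A)) (hf : IsCA f) (s : List A) :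
    s ∈ lang (genLimitSet f) ↔
      ∃ (v : List A) (i : ℤ), ∀ u w : List A,
        {t : ℕ |
          (f^[t] '' cylinder (u ++ v ++ w) (i - u.length) ∩ cylinder s 0).Nonempty}.Infinite := by
  have hS := isClopen_cylinder s 0
  calc s ∈ lang (genLimitSet f)
    _ ↔ (cylinder s 0 ∩ genLimitSet f).Nonempty :=
      mem_lang_iff_of_preimage_shift_eq hf.preimage_shift_genLimitSet
    _ ↔ ∃ V, IsOpen V ∧ V.Nonempty ∧ Enables f V (cylinder s 0) :=
      inter_genLimitSet_nonempty_iff_exists_enables hf.1 hS.isClosed.isCompact hS.isOpen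
    _ ↔ ∃ (v : List A) (i : ℤ), Enables f (cylinder v i) (cylinder s 0) :=
      exists_isOpen_enables_iff_exists_cylinder
    _ ↔ _ := exists₂_congr fun _ _ => enables_cylinder_iff

end Gls
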